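/- arXiv:2107.01572 — 4 statements merged into one kernel-verified Lean document; each statement's English description precedes it below -/
import Mathlib

section
/- Let Ω ⊆ ℂ be a nonempty open set which is simply connected as a topological subspace. Let ψ : ℂ → ℝ be four times continuously differentiable on Ω (in the real sense, identifying ℂ with ℝ²) and biharmonic on Ω, i.e. Δ(Δψ)(z) = 0 for all z ∈ Ω. Then there exist functions f, g : ℂ → ℂ holomorphic on Ω such that ψ(z) = Im( conj(z)·f(z) + g(z) ) for every z ∈ Ω. -/
open Complex

/-- `∂ₓψ(z)`: real Fréchet derivative of `ψ` at `z` in direction `1`. -/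
noncomputable def pdx (ψ : ℂ → ℝ) (z : ℂ) : ℝ := fderiv ℝ ψ z 1

/-- `∂ᵧψ(z)`: real Fréchet derivative of `ψ` at `z` in direction `i`. -/
noncomputable def pdy (ψ : ℂ → ℝ) (z : ℂ) : ℝ := fderiv ℝ ψ z Complex.I

/-- Laplacian `Δψ = ∂ₓ∂ₓψ + ∂ᵧ∂ᵧψ`. -/
noncomputable def lap (ψ : ℂ → ℝ) (z : ℂ) : ℝ := pdx (pdx ψ) z + pdy (pdy ψ) z

/-!
By uniqueness of primitives up to constants, local primitives of a locally exact form define a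
covering space whose fibre is the coefficient group with the discrete topology. Over a simply
connected base this covering has a section, which is a global primitive. Hence holomorphic functions
on `Ω` have primitives, and harmonic functions on `Ω` are imaginary parts of holomorphic functions.

If `Δψ = Im H` with `H` holomorphic, choose `f` with `f' = H / 4`. Since `Δ(conj z · f) = 4 f'`, the
difference `ψ - Im (conj z · f)` is harmonic, hence equal to `Im g` for a holomorphic `g`.
-/

open Set Topology InnerProductSpace Laplacian ComplexConjugate

section LocallyConstantCocycle

theorem exists_continuous_section_of_isCoveringMap {E X : Type*} [TopologicalSpace E]
    [TopologicalSpace X] [SimplyConnectedSpace X] [LocallyPathConnectedSpace X] {p : E → X}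
    (hp : IsCoveringMap p) {e : E} : ∃ s : C(X, E), ∀ x, p (s x) = x := by
  obtain ⟨s, ⟨-, hs⟩, -⟩ := hp.existsUnique_continuousMap_lifts (.id X) (p e) e rfl
  exact ⟨s, congrFun hs⟩

variable {X ι A : Type*} [TopologicalSpace X] [AddGroup A]

/-- The fibre bundle with structure group `A`, acting on the discrete fibre `A` by right
translations, whose cocycle on `U i ∩ U j` is the locally constant function `F i - F j`. A section
is a function on `X` that differs from each `F i` by a locally constant function on `U i`, read in
the chart `i` as its difference with `F i`. The chart used at `x` is `idx x`. -/
def translationBundleCore [TopologicalSpace A] [DiscreteTopology A] (F : ι → X → A)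
    (U : ι → Set X) (hU : ∀ i, IsOpen (U i)) (idx : X → ι) (hidx : ∀ x, x ∈ U (idx x))
    (hF : ∀ i j, ContinuousOn (F i - F j) (U i ∩ U j)) : FiberBundleCore ι X A where
  baseSet := U
  isOpen_baseSet := hU
  indexAt := idx
  mem_baseSet_at := hidx
  coordChange i j x a := a + (F i x - F j x)
  coordChange_self i x _ a := by simp
  continuousOn_coordChange i j :=
    continuousOn_snd.add ((hF i j).comp continuousOn_fst fun _ hp ↦ hp.1)
  coordChange_comp i j k x _ a := by simp [add_assoc]

theorem exists_eventually_sub_eq_of_simplyConnectedSpace [SimplyConnectedSpace X]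
    [LocallyPathConnectedSpace X] {U : ι → Set X} (hU : ∀ i, IsOpen (U i))
    (hcover : ∀ x, ∃ i, x ∈ U i) {F : ι → X → A}
    (hF : ∀ i j, ∀ x ∈ U i ∩ U j, ∀ᶠ y in 𝓝 x, F i y - F j y = F i x - F j x) :
    ∃ G : X → A, ∀ i, ∀ x ∈ U i, ∀ᶠ y in 𝓝 x, G y - F i y = G x - F i x := by
  let : TopologicalSpace A := ⊥
  have : DiscreteTopology A := ⟨rfl⟩
  choose idx hidx using hcover
  have hF' (i j : ι) : ContinuousOn (F i - F j) (U i ∩ U j) := fun x hx ↦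
    (continuousAt_const.congr <| (hF i j x hx).mono fun _ h ↦ h.symm).continuousWithinAt
  let Z := translationBundleCore F U hU idx hidx hF'
  have hcov : IsCoveringMap Z.proj := FiberBundle.isCoveringMap
  obtain ⟨x₀⟩ : Nonempty X := inferInstance
  obtain ⟨s, hs⟩ := exists_continuous_section_of_isCoveringMap hcov (e := ⟨x₀, (0 : A)⟩)
  let v (x : X) : A := (s x).2
  let G (x : X) : A := v x + F (idx x) x
  have hG (i : ι) (x : X) : (Z.localTriv i (s x)).2 = G x - F i x := by
    have hsx : (s x).1 = x := hs x
    have hchart : (Z.localTriv i (s x)).2 = v x + (F (idx (s x).1) (s x).1 - F i (s x).1) := rfl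
    rw [hchart, hsx, add_sub_assoc]
  refine ⟨G, fun i x hx ↦ ?_⟩
  have hsource : s x ∈ (Z.localTriv i).source :=
    (Z.mem_localTriv_source i _).2 <| by rwa [show (s x).1 = x from hs x]
  have hcont : ContinuousAt (fun y ↦ (Z.localTriv i (s y)).2) x :=
    (((Z.localTriv i).continuousAt hsource).comp s.continuous.continuousAt).snd
  simpa only [hG, mem_singleton_iff] using hcont.eventually_mem ((isOpen_discrete {_}).mem_nhds rfl)

end LocallyConstantCocycle

section Primitives

variable {V E : Type*} [NormedAddCommGroup V] [NormedSpace ℝ V] [NormedAddCommGroup E]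
  [NormedSpace ℝ E] {ω : V → V →L[ℝ] E}

theorem eventually_sub_eq_of_eventually_hasFDerivAt {F G : V → E} {x : V}
    (hF : ∀ᶠ y in 𝓝 x, HasFDerivAt F (ω y) y) (hG : ∀ᶠ y in 𝓝 x, HasFDerivAt G (ω y) y) :
    ∀ᶠ y in 𝓝 x, F y - G y = F x - G x := by
  obtain ⟨r, hr, hball⟩ := Metric.eventually_nhds_iff_ball.1 (hF.and hG)
  have hsub : ∀ y ∈ Metric.ball x r, HasFDerivAt (F - G) (0 : V →L[ℝ] E) y := fun y hy ↦
    sub_self (ω y) ▸ (hball y hy).1.sub (hball y hy).2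
  filter_upwards [Metric.ball_mem_nhds x hr] with y hy
  exact Metric.isOpen_ball.is_const_of_fderiv_eq_zero (convex_ball x r).isPreconnected
    (fun z hz ↦ (hsub z hz).differentiableAt.differentiableWithinAt)
    (fun z hz ↦ (hsub z hz).fderiv) hy (Metric.mem_ball_self hr)

theorem exists_hasFDerivAt_of_isSimplyConnected {Ω : Set V} (hΩ : IsOpen Ω)
    (hsc : IsSimplyConnected Ω)
    (hω : ∀ x ∈ Ω, ∃ F : V → E, ∀ᶠ y in 𝓝 x, HasFDerivAt F (ω y) y) :
    ∃ G : V → E, ∀ x ∈ Ω, HasFDerivAt G (ω x) x := by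
  have := hsc.simplyConnectedSpace
  have := hΩ.locallyPathConnectedSpace
  choose! F hF using hω
  let U (i : Ω) : Set Ω := {x | ∀ᶠ y in 𝓝 (x : V), HasFDerivAt (F i) (ω y) y}
  have hFU (i j : Ω) (x : Ω) (hx : x ∈ U i ∩ U j) :
      ∀ᶠ y : Ω in 𝓝 x, F i y - F j y = F i x - F j x :=
    continuousAt_subtype_val.eventually <|
      eventually_sub_eq_of_eventually_hasFDerivAt hx.1 hx.2
  obtain ⟨G, hG⟩ := exists_eventually_sub_eq_of_simplyConnectedSpace (U := U)
    (F := fun i x ↦ F i x)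
    (fun _ ↦ isOpen_setOfPred_eventually_nhds.preimage continuous_subtype_val)
    (fun x ↦ ⟨x, hF x x.2⟩) hFU
  refine ⟨Function.extend Subtype.val G 0, fun x hx ↦ ?_⟩
  have hGF : Function.extend Subtype.val G 0 =ᶠ[𝓝 x] fun y ↦ F x y + (G ⟨x, hx⟩ - F x x) := by
    rw [Filter.EventuallyEq, ← map_nhds_subtype_coe_eq_nhds hx (hΩ.mem_nhds hx),
      Filter.eventually_map]
    filter_upwards [hG ⟨x, hx⟩ ⟨x, hx⟩ (hF x hx)] with y hy
    rw [Subtype.val_injective.extend_apply, ← hy, add_sub_cancel]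
  exact ((hF x hx).self_of_nhds.add_const _).congr_of_eventuallyEq hGF

theorem isExactOn_of_isSimplyConnected {E : Type*} [NormedAddCommGroup E] [NormedSpace ℂ E]
    [CompleteSpace E] {h : ℂ → E} {Ω : Set ℂ} (hΩ : IsOpen Ω) (hsc : IsSimplyConnected Ω)
    (hh : DifferentiableOn ℂ h Ω) : IsExactOn h Ω := by
  let ω (z : ℂ) : ℂ →L[ℂ] E := .toSpanSingleton ℂ (h z)
  obtain ⟨G, hG⟩ := exists_hasFDerivAt_of_isSimplyConnected (ω := fun z ↦ (ω z).restrictScalars ℝ)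
    hΩ hsc fun z hz ↦ by
      obtain ⟨r, hr, hball⟩ := Metric.isOpen_iff.1 hΩ z hz
      obtain ⟨F, hF⟩ := (hh.mono hball).isExactOn_ball
      refine ⟨F, ?_⟩
      filter_upwards [Metric.ball_mem_nhds z hr] with w hw
      exact (hF w hw).hasFDerivAt.restrictScalars ℝ
  exact ⟨G, fun z hz ↦ hasFDerivAt_of_restrictScalars ℝ (hG z hz) rfl⟩

end Primitives

section HarmonicFunctions

theorem hasFDerivAt_re_of_hasDerivAt {F : ℂ → ℂ} {L : ℂ →L[ℝ] ℝ} {z : ℂ}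
    (hF : HasDerivAt F (L 1 - I * L I) z) : HasFDerivAt (fun w ↦ (F w).re) L z := by
  refine (reCLM.hasFDerivAt.comp z (hF.hasFDerivAt.restrictScalars ℝ)).congr_fderiv ?_
  ext v
  have hv : v = v.re • (1 : ℂ) + v.im • I := by simp
  conv_rhs => rw [hv, map_add, map_smul, map_smul]
  simp

theorem exists_differentiableOn_im_eq_of_harmonicOnNhd {Ω : Set ℂ} {u : ℂ → ℝ} (hΩ : IsOpen Ω)
    (hsc : IsSimplyConnected Ω) (hu : HarmonicOnNhd u Ω) :
    ∃ F : ℂ → ℂ, DifferentiableOn ℂ F Ω ∧ ∀ z ∈ Ω, u z = (F z).im := by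
  obtain ⟨F, hF⟩ := isExactOn_of_isSimplyConnected hΩ hsc fun z hz ↦
    (HarmonicAt.differentiableAt_complex_partial (hu z hz)).differentiableWithinAt
  have hre := fun z hz ↦ hasFDerivAt_re_of_hasDerivAt (hF z hz)
  obtain ⟨a, ha⟩ := hΩ.exists_eq_add_of_fderiv_eq hsc.isPathConnected.isConnected.isPreconnected
    (hu.contDiffOn.differentiableOn two_ne_zero)
    (fun z hz ↦ (hre z hz).differentiableAt.differentiableWithinAt)
    (fun z hz ↦ (hre z hz).fderiv.symm)
  refine ⟨fun z ↦ I * (F z + a), fun z hz ↦ ?_, fun z hz ↦ by simpa using ha hz⟩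
  exact (((hF z hz).add_const _).const_mul I).differentiableAt.differentiableWithinAt

end HarmonicFunctions

section Biharmonic

theorem lap_eq_laplacian {u : ℂ → ℝ} {z : ℂ} (hu : ContDiffAt ℝ 2 u z) : lap u z = Δ u z := by
  have hd : DifferentiableAt ℝ (fderiv ℝ u) z :=
    (hu.fderiv_right (m := 1) le_rfl).differentiableAt one_ne_zero
  have hsecond (v : ℂ) :
      fderiv ℝ (fun w ↦ fderiv ℝ u w v) z v = fderiv ℝ (fderiv ℝ u) z v v := by
    simp [fderiv_clm_apply hd (differentiableAt_const v)]
  simp only [laplacian_eq_iteratedFDeriv_complexPlane, iteratedFDeriv_two_apply]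
  exact congrArg₂ (· + ·) (hsecond 1) (hsecond I)

theorem contDiffAt_lap {n : WithTop ℕ∞} {u : ℂ → ℝ} {z : ℂ} (hu : ContDiffAt ℝ (n + 2) u z) :
    ContDiffAt ℝ n (lap u) z := by
  rw [← one_add_one_eq_two, ← add_assoc] at hu
  have hfirst (v : ℂ) : ContDiffAt ℝ (n + 1) (fun w ↦ fderiv ℝ u w v) z :=
    hu.fderiv_right_succ.clm_apply contDiffAt_const
  have hsecond (v : ℂ) : ContDiffAt ℝ n (fun w ↦ fderiv ℝ (fun y ↦ fderiv ℝ u y v) w v) z :=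
    (hfirst v).fderiv_right_succ.clm_apply contDiffAt_const
  exact (hsecond 1).add (hsecond I)

theorem harmonicOnNhd_lap {Ω : Set ℂ} {ψ : ℂ → ℝ} (hΩ : IsOpen Ω) (hψ : ContDiffOn ℝ 4 ψ Ω)
    (hbih : ∀ z ∈ Ω, lap (lap ψ) z = 0) : HarmonicOnNhd (lap ψ) Ω := by
  have hlap : ∀ z ∈ Ω, ContDiffAt ℝ 2 (lap ψ) z := fun z hz ↦
    contDiffAt_lap ((hψ.contDiffAt (hΩ.mem_nhds hz)).of_le (by norm_num))
  refine fun z hz ↦ ⟨hlap z hz, ?_⟩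
  filter_upwards [hΩ.mem_nhds hz] with w hw
  rw [← lap_eq_laplacian (hlap w hw), hbih w hw, Pi.zero_apply]

variable {f : ℂ → ℂ} {z : ℂ}

theorem contDiffAt_conj_mul {n : WithTop ℕ∞} (hf : AnalyticAt ℂ f z) :
    ContDiffAt ℝ n (fun w ↦ conj w * f w) z :=
  conjCLE.contDiff.contDiffAt.mul (hf.contDiffAt.restrict_scalars ℝ)

theorem hasFDerivAt_conj_mul {f' : ℂ} (hf : HasDerivAt f f' z) :
    HasFDerivAt (fun w ↦ conj w * f w)
      (f z • (conjCLE : ℂ →L[ℝ] ℂ) + (conj z * f') • ContinuousLinearMap.id ℝ ℂ) z := by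
  refine (conjCLE.hasFDerivAt.mul (hf.hasFDerivAt.restrictScalars ℝ)).congr_fderiv ?_
  ext v
  simp only [ContinuousAlgEquiv.coeCLE_apply, conjCAE_apply, add_apply, smul_apply,
    ContinuousLinearMap.coe_restrictScalars', ContinuousLinearMap.toSpanSingleton_apply,
    smul_eq_mul, ContinuousLinearEquiv.coe_coe, ContinuousLinearMap.id_apply]
  ring

theorem laplacian_conj_mul (hf : AnalyticAt ℂ f z) :
    Δ (fun w ↦ conj w * f w) z = 4 * deriv f z := by
  have hfirst : fderiv ℝ (fun w ↦ conj w * f w) =ᶠ[𝓝 z] fun w ↦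
      f w • (conjCLE : ℂ →L[ℝ] ℂ) + (conj w * deriv f w) • ContinuousLinearMap.id ℝ ℂ := by
    filter_upwards [hf.eventually_analyticAt] with w hw
    exact (hasFDerivAt_conj_mul hw.differentiableAt.hasDerivAt).fderiv
  have hf₁ := hf.differentiableAt.hasDerivAt.hasFDerivAt.restrictScalars ℝ
  have hf₂ := hasFDerivAt_conj_mul hf.deriv.differentiableAt.hasDerivAt
  have hsecond := (hf₁.smul_const (conjCLE : ℂ →L[ℝ] ℂ)).fun_add
    (hf₂.smul_const (ContinuousLinearMap.id ℝ ℂ))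
  have hsecond_apply (v : ℂ) : fderiv ℝ (fderiv ℝ fun w ↦ conj w * f w) z v v =
      2 * deriv f z * (conj v * v) + conj z * deriv (deriv f) z * v ^ 2 := by
    rw [hfirst.fderiv_eq, hsecond.fderiv]
    simp only [add_apply, ContinuousLinearMap.smulRight_apply,
      ContinuousLinearMap.coe_restrictScalars', ContinuousLinearMap.toSpanSingleton_apply,
      smul_eq_mul, smul_apply, ContinuousLinearEquiv.coe_coe, ContinuousAlgEquiv.coeCLE_apply,
      conjCAE_apply, ContinuousLinearMap.id_apply]
    ring
  simp only [laplacian_eq_iteratedFDeriv_complexPlane, iteratedFDeriv_two_apply]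
  calc fderiv ℝ (fderiv ℝ fun w ↦ conj w * f w) z 1 1
        + fderiv ℝ (fderiv ℝ fun w ↦ conj w * f w) z I I
      = (2 * deriv f z * (conj 1 * 1) + conj z * deriv (deriv f) z * 1 ^ 2)
        + (2 * deriv f z * (conj I * I) + conj z * deriv (deriv f) z * I ^ 2) :=
        congrArg₂ (· + ·) (hsecond_apply 1) (hsecond_apply I)
    _ = 4 * deriv f z := by
        rw [map_one, conj_I, neg_mul, I_mul_I, I_sq]
        ring

theorem harmonicOnNhd_sub_im_conj_mul {Ω : Set ℂ} {ψ : ℂ → ℝ} (hΩ : IsOpen Ω)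
    (hψ : ContDiffOn ℝ 2 ψ Ω) (hf : DifferentiableOn ℂ f Ω)
    (hψf : ∀ z ∈ Ω, Δ ψ z = (4 * deriv f z).im) :
    HarmonicOnNhd (ψ - fun z ↦ (conj z * f z).im) Ω := by
  have hψ' : ∀ z ∈ Ω, ContDiffAt ℝ 2 ψ z := fun z hz ↦ hψ.contDiffAt (hΩ.mem_nhds hz)
  have hfa : ∀ z ∈ Ω, AnalyticAt ℂ f z := fun z hz ↦ hf.analyticAt (hΩ.mem_nhds hz)
  have him : ∀ z ∈ Ω, ContDiffAt ℝ 2 (imCLM ∘ fun w ↦ conj w * f w) z := fun z hz ↦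
    imCLM.contDiff.contDiffAt.comp z (contDiffAt_conj_mul (hfa z hz))
  refine fun z hz ↦ ⟨(hψ' z hz).sub (him z hz), ?_⟩
  filter_upwards [hΩ.mem_nhds hz] with w hw
  calc Δ (ψ - imCLM ∘ fun w ↦ conj w * f w) w
      = Δ ψ w - (Δ (fun w ↦ conj w * f w) w).im := by
        rw [(hψ' w hw).laplacian_sub (him w hw),
          (contDiffAt_conj_mul (hfa w hw)).laplacian_CLM_comp_left, Function.comp_apply,
          imCLM_apply]
    _ = 0 := by rw [hψf w hw, laplacian_conj_mul (hfa w hw), sub_self]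

end Biharmonic

/-- Goursat representation: every biharmonic function on a nonempty simply connected
open set `Ω ⊆ ℂ` can be written as `Im (conj z * f z + g z)` with `f, g` holomorphic. -/
theorem goursat_representation (Ω : Set ℂ) (hΩ : IsOpen Ω) (hne : Ω.Nonempty)
    (hsc : SimplyConnectedSpace Ω)
    (ψ : ℂ → ℝ) (hψ : ContDiffOn ℝ 4 ψ Ω)
    (hbih : ∀ z ∈ Ω, lap (lap ψ) z = 0) :
    ∃ f g : ℂ → ℂ, DifferentiableOn ℂ f Ω ∧ DifferentiableOn ℂ g Ω ∧
      ∀ z ∈ Ω, ψ z = ((starRingEnd ℂ) z * f z + g z).im := by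
  have hψ₂ : ContDiffOn ℝ 2 ψ Ω := hψ.of_le (by norm_num)
  obtain ⟨H, hH, hHψ⟩ := exists_differentiableOn_im_eq_of_harmonicOnNhd hΩ hsc
    (harmonicOnNhd_lap hΩ hψ hbih)
  obtain ⟨f, hf⟩ := isExactOn_of_isSimplyConnected hΩ hsc (hH.div_const 4)
  have hfd : DifferentiableOn ℂ f Ω := fun z hz ↦ (hf z hz).differentiableAt.differentiableWithinAt
  have hΔψ : ∀ z ∈ Ω, Δ ψ z = (4 * deriv f z).im := fun z hz ↦ by
    have hfH : 4 * deriv f z = H z := by rw [(hf z hz).deriv]; ring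
    rw [← lap_eq_laplacian (hψ₂.contDiffAt (hΩ.mem_nhds hz)), hHψ z hz, hfH]
  obtain ⟨g, hg, hgψ⟩ := exists_differentiableOn_im_eq_of_harmonicOnNhd hΩ hsc
    (harmonicOnNhd_sub_im_conj_mul hΩ hψ₂ hfd hΔψ)
  refine ⟨f, g, hfd, hg, fun z hz ↦ ?_⟩
  rw [add_im, ← hgψ z hz, Pi.sub_apply, add_sub_cancel]
end

section
/- Let Ω ⊆ ℂ be a nonempty open connected set and let f, g : ℂ → ℂ be holomorphic on Ω. If Im( conj(z)·f(z) + g(z) ) = 0 for every z ∈ Ω, then there exist real numbers γ, α and a complex number C such that f(z) = γ·z + C and g(z) = conj(C)·z + α for every z ∈ Ω. -/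
open Complex

/-!
Since `u z = conj z * f z + g z` is real valued, its Wirtinger derivatives `∂u/∂z` and
`∂u/∂(conj z)` are conjugate, which reads `conj z * f' z + g' z = conj (f z)`. Comparing the
derivatives of both sides with respect to `conj z` gives `f' = conj f'`: a real-valued holomorphic
function, hence a real constant `γ`. Thus `f z = γ z + C`, the first identity becomes
`g' = conj C`, and the constant term of `g` has imaginary part `Im (u z) = 0`.
-/

open scoped ComplexConjugate Topology

/-- `u` is real differentiable at `z` with Wirtinger derivatives `∂u/∂z = a` and
`∂u/∂(conj z) = b`, that is, with real differential `v ↦ a * v + b * conj v`. Comparing these two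
coefficients is how identities between holomorphic functions and their conjugates are
differentiated. -/
def HasWirtingerDerivAt (u : ℂ → ℂ) (a b z : ℂ) : Prop :=
  HasFDerivAt u (a • ContinuousLinearMap.id ℝ ℂ + b • (conjCLE : ℂ →L[ℝ] ℂ)) z

namespace HasWirtingerDerivAt

variable {u v f g : ℂ → ℂ} {a b c d f' g' z : ℂ}

theorem of_hasDerivAt (hf : HasDerivAt f f' z) : HasWirtingerDerivAt f f' 0 z := by
  refine (hf.hasFDerivAt.restrictScalars ℝ).congr_fderiv ?_
  ext
  simp [mul_comm]

theorem conj_id (z : ℂ) : HasWirtingerDerivAt (fun w ↦ conj w) 0 1 z := by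
  refine conjCLE.hasFDerivAt.congr_fderiv ?_
  ext
  simp

theorem star (hu : HasWirtingerDerivAt u a b z) :
    HasWirtingerDerivAt (fun w ↦ conj (u w)) (conj b) (conj a) z := by
  refine (conjCLE.hasFDerivAt.comp z hu).congr_fderiv ?_
  ext
  simp [add_comm]

theorem add (hu : HasWirtingerDerivAt u a b z) (hv : HasWirtingerDerivAt v c d z) :
    HasWirtingerDerivAt (fun w ↦ u w + v w) (a + c) (b + d) z := by
  refine (HasFDerivAt.fun_add hu hv).congr_fderiv ?_
  module

theorem mul (hu : HasWirtingerDerivAt u a b z) (hv : HasWirtingerDerivAt v c d z) :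
    HasWirtingerDerivAt (fun w ↦ u w * v w) (u z * c + v z * a) (u z * d + v z * b) z := by
  refine (HasFDerivAt.fun_mul hu hv).congr_fderiv ?_
  module

theorem unique (hu : HasWirtingerDerivAt u a b z) (hv : HasWirtingerDerivAt v c d z)
    (huv : u =ᶠ[𝓝 z] v) : a = c ∧ b = d := by
  have differentials_eq := HasFDerivAt.unique hu (hv.congr_of_eventuallyEq huv)
  have at_one : a + b = c + d := by simpa using DFunLike.congr_fun differentials_eq 1
  have at_I : a * I + b * -I = c * I + d * -I := by
    simpa using DFunLike.congr_fun differentials_eq I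
  have sub_eq : a - b = c - d := mul_right_cancel₀ I_ne_zero (by linear_combination at_I)
  constructor
  · linear_combination (at_one + sub_eq) / 2
  · linear_combination (at_one - sub_eq) / 2

theorem eq_conj_of_im_eq_zero (hu : HasWirtingerDerivAt u a b z)
    (him : ∀ᶠ w in 𝓝 z, (u w).im = 0) : a = conj b :=
  (hu.unique hu.star (him.mono fun _ hw ↦ (conj_eq_iff_im.2 hw).symm)).1

theorem conj_mul_add (hf : HasDerivAt f f' z) (hg : HasDerivAt g g' z) :
    HasWirtingerDerivAt (fun w ↦ conj w * f w + g w) (conj z * f' + g') (f z) z := by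
  simpa using ((conj_id z).mul (of_hasDerivAt hf)).add (of_hasDerivAt hg)

end HasWirtingerDerivAt

theorem exists_eq_smul_add_of_deriv_eq_const {𝕜 E : Type*} [RCLike 𝕜] [NormedAddCommGroup E]
    [NormedSpace 𝕜 E] {f : 𝕜 → E} {s : Set 𝕜} {c : E} (hs : IsOpen s) (hs' : IsPreconnected s)
    (hf : DifferentiableOn 𝕜 f s) (hc : ∀ x ∈ s, deriv f x = c) :
    ∃ b, ∀ x ∈ s, f x = x • c + b :=
  hs.exists_eq_add_of_deriv_eq hs' hf (differentiableOn_id.smul_const c) fun x hx ↦ by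
    simp [hc x hx, deriv_smul_const]

section GoursatRepresentation

variable {Ω : Set ℂ} {f g h : ℂ → ℂ}

theorem exists_eq_ofReal_of_im_eq_zero (hΩ : IsOpen Ω) (hconn : IsConnected Ω)
    (hf : DifferentiableOn ℂ f Ω) (him : ∀ z ∈ Ω, (f z).im = 0) :
    ∃ γ : ℝ, ∀ z ∈ Ω, f z = γ := by
  obtain ⟨c, hc⟩ := (hf.analyticOnNhd hΩ).eq_const_of_im_eq_const him hΩ hconn
  refine ⟨c.re, fun z hz ↦ Complex.ext ?_ ?_⟩
  · simp [hc z hz]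
  · simp [him z hz]

theorem conj_mul_deriv_add_deriv_eq_conj (hΩ : IsOpen Ω)
    (hf : DifferentiableOn ℂ f Ω) (hg : DifferentiableOn ℂ g Ω)
    (him : ∀ z ∈ Ω, (conj z * f z + g z).im = 0) :
    ∀ z ∈ Ω, conj z * deriv f z + deriv g z = conj (f z) := by
  intro z hz
  have hΩz := hΩ.mem_nhds hz
  exact (HasWirtingerDerivAt.conj_mul_add (hf.hasDerivAt hΩz)
    (hg.hasDerivAt hΩz)).eq_conj_of_im_eq_zero (Filter.eventually_of_mem hΩz him)

theorem eq_conj_deriv_of_conj_mul_add_eq_conj (hΩ : IsOpen Ω)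
    (hf : DifferentiableOn ℂ f Ω) (hg : DifferentiableOn ℂ g Ω) (hh : DifferentiableOn ℂ h Ω)
    (hfgh : ∀ z ∈ Ω, conj z * f z + g z = conj (h z)) :
    ∀ z ∈ Ω, f z = conj (deriv h z) := by
  intro z hz
  have hΩz := hΩ.mem_nhds hz
  have hleft := HasWirtingerDerivAt.conj_mul_add (hf.hasDerivAt hΩz) (hg.hasDerivAt hΩz)
  have hright := (HasWirtingerDerivAt.of_hasDerivAt (hh.hasDerivAt hΩz)).star
  exact (hleft.unique hright (Filter.eventually_of_mem hΩz hfgh)).2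

theorem im_deriv_eq_zero_of_im_conj_mul_add_eq_zero (hΩ : IsOpen Ω)
    (hf : DifferentiableOn ℂ f Ω) (hg : DifferentiableOn ℂ g Ω)
    (him : ∀ z ∈ Ω, (conj z * f z + g z).im = 0) :
    ∀ z ∈ Ω, (deriv f z).im = 0 := fun z hz ↦
  conj_eq_iff_im.1 (eq_conj_deriv_of_conj_mul_add_eq_conj hΩ (hf.deriv hΩ) (hg.deriv hΩ) hf
    (conj_mul_deriv_add_deriv_eq_conj hΩ hf hg him) z hz).symm

end GoursatRepresentation

theorem im_conj_mul_add_affine (γ : ℝ) (C A z : ℂ) :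
    (conj z * (z * γ + C) + (z * conj C + A)).im = A.im := by
  simp only [add_im, mul_im, mul_re, add_re, conj_re, conj_im, ofReal_re, ofReal_im]
  ring

/-- Uniqueness in the Goursat representation: if `Im (conj z * f z + g z)` vanishes
identically on a nonempty open connected set, then `f(z) = γ z + C` and
`g(z) = conj C * z + α` for some real `γ, α` and complex `C`. -/
theorem goursat_uniqueness (Ω : Set ℂ) (hΩ : IsOpen Ω) (hconn : IsConnected Ω)
    (f g : ℂ → ℂ) (hf : DifferentiableOn ℂ f Ω) (hg : DifferentiableOn ℂ g Ω)
    (h0 : ∀ z ∈ Ω, ((starRingEnd ℂ) z * f z + g z).im = 0) :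
    ∃ (γ α : ℝ) (C : ℂ), ∀ z ∈ Ω,
      f z = (γ : ℂ) * z + C ∧ g z = (starRingEnd ℂ) C * z + (α : ℂ) := by
  obtain ⟨γ, hγ⟩ := exists_eq_ofReal_of_im_eq_zero hΩ hconn (hf.deriv hΩ)
    (im_deriv_eq_zero_of_im_conj_mul_add_eq_zero hΩ hf hg h0)
  obtain ⟨C, hfC⟩ := exists_eq_smul_add_of_deriv_eq_const hΩ hconn.isPreconnected hf hγ
  have hg' : ∀ z ∈ Ω, deriv g z = conj C := fun z hz ↦ by
    have hfg := conj_mul_deriv_add_deriv_eq_conj hΩ hf hg h0 z hz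
    rw [hγ z hz, hfC z hz, smul_eq_mul, map_add, map_mul, conj_ofReal] at hfg
    exact add_left_cancel hfg
  obtain ⟨A, hgA⟩ := exists_eq_smul_add_of_deriv_eq_const hΩ hconn.isPreconnected hg hg'
  have hA : A.im = 0 := by
    obtain ⟨z, hz⟩ := hconn.nonempty
    simpa only [hfC z hz, hgA z hz, smul_eq_mul, im_conj_mul_add_affine] using h0 z hz
  refine ⟨γ, A.re, C, fun z hz ↦ ⟨?_, ?_⟩⟩
  · rw [hfC z hz, smul_eq_mul, mul_comm]
  · rw [hgA z hz, smul_eq_mul, mul_comm, conj_eq_iff_re.1 (conj_eq_iff_im.2 hA)]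
end

section
/- Let Ω ⊆ ℂ be a nonempty open set which is simply connected as a topological subspace, and let ω : ℂ → ℝ be twice continuously differentiable on Ω (in the real sense) and harmonic on Ω, i.e. Δω = 0 on Ω. Then there exists a function p : ℂ → ℝ, continuously differentiable on Ω, such that the Cauchy–Riemann conditions ∂ₓω(z) = ∂ᵧp(z) and ∂ᵧω(z) = −∂ₓp(z) hold for every z ∈ Ω; equivalently, the complex-valued function h(z) = p(z) − i·ω(z) is holomorphic on Ω. -/
open Complex

/- The Cauchy–Riemann conditions say `dp = ⋆dω`, where `⋆dω = -dω ∘ (I * ·)` is the conjugate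
differential of `ω`, and `ω` is harmonic exactly when `⋆dω` is closed. A closed form has primitives
locally; they differ by locally constant functions, so their germs form a covering space, and over
a simply connected base this covering has a global section. -/

open Filter Topology

section Gluing

variable {X ι A : Type*} [TopologicalSpace X]

theorem exists_continuousMap_rightInverse_of_isCoveringMap {E : Type*} [TopologicalSpace E]
    [Nonempty E] [SimplyConnectedSpace X] [LocallyPathConnectedSpace X] {p : E → X}
    (hp : IsCoveringMap p) : ∃ s : C(X, E), Function.RightInverse s p := by
  obtain ⟨e⟩ := ‹Nonempty E›
  obtain ⟨s, ⟨-, hs⟩, -⟩ := hp.existsUnique_continuousMap_lifts (ContinuousMap.id X) (p e) e rfl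
  exact ⟨s, congrFun hs⟩

variable [AddGroup A] {U : ι → Set X} {f : ι → X → A}

/-- The bundle with discrete fibre `A` whose sections are the functions on `X` that differ from each
`f i` by a locally constant function on `U i`. A point `v` of the fibre over `x`, read in the chart
`i`, stands for the germ at `x` of `v + f i`. -/
def localDifferenceCore [TopologicalSpace A] [DiscreteTopology A] (hU : ∀ i, IsOpen (U i))
    (indexAt : X → ι) (hindex : ∀ x, x ∈ U (indexAt x))
    (hf : ∀ i j, ContinuousOn (fun x ↦ f i x - f j x) (U i ∩ U j)) : FiberBundleCore ι X A where
  baseSet := U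
  isOpen_baseSet := hU
  indexAt := indexAt
  mem_baseSet_at := hindex
  coordChange i j x v := v + (f i x - f j x)
  coordChange_self i x _ v := by rw [sub_self, add_zero]
  continuousOn_coordChange i j :=
    continuousOn_snd.add ((hf i j).comp continuousOn_fst fun _ hx ↦ hx.1)
  coordChange_comp i j k x _ v := by rw [add_assoc, sub_add_sub_cancel]

theorem exists_forall_eventually_sub_eq [SimplyConnectedSpace X] [LocallyPathConnectedSpace X]
    (hU : ∀ i, IsOpen (U i)) (hcover : ∀ x, ∃ i, x ∈ U i)
    (hf : ∀ i j, ∀ x ∈ U i ∩ U j, ∀ᶠ y in 𝓝 x, f i y - f j y = f i x - f j x) :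
    ∃ g : X → A, ∀ i, ∀ x ∈ U i, ∀ᶠ y in 𝓝 x, g y - f i y = g x - f i x := by
  let _ : TopologicalSpace A := ⊥
  have _ : DiscreteTopology A := ⟨rfl⟩
  choose indexAt hindex using hcover
  have hcont (i j : ι) : ContinuousOn (fun x ↦ f i x - f j x) (U i ∩ U j) := fun x hx ↦
    (tendsto_nhds_of_eventually_eq (hf i j x hx)).mono_left nhdsWithin_le_nhds
  let Z := localDifferenceCore hU indexAt hindex hcont
  obtain ⟨x₀⟩ : Nonempty X := inferInstance
  have : Nonempty Z.TotalSpace := ⟨⟨x₀, (0 : A)⟩⟩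
  have hcov : IsCoveringMap (Bundle.TotalSpace.proj : Z.TotalSpace → X) :=
    FiberBundle.isCoveringMap (F := A) (E := Z.Fiber)
  obtain ⟨s, hs⟩ := exists_continuousMap_rightInverse_of_isCoveringMap hcov
  let v (x : X) : A := (s x).2
  refine ⟨fun x ↦ v x + f (indexAt x) x, fun i x hx ↦ ?_⟩
  have hchart (y : X) : (Z.localTriv i (s y)).2 = v y + f (indexAt y) y - f i y := by
    change v y + (f (indexAt (s y).1) (s y).1 - f i (s y).1) = _
    rw [hs y, add_sub_assoc]
  have hsource : s x ∈ (Z.localTriv i).source := by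
    rw [FiberBundleCore.mem_localTriv_source, hs x]
    exact hx
  have hcoord : ContinuousAt (fun y ↦ (Z.localTriv i (s y)).2) x :=
    continuousAt_snd.comp (((Z.localTriv i).continuousAt hsource).comp s.continuous.continuousAt)
  simpa only [hchart, Set.mem_singleton_iff] using
    hcoord.eventually_mem (isOpen_discrete {_} |>.mem_nhds rfl)

end Gluing

section Primitive

variable {𝕜 E F : Type*} [RCLike 𝕜] [NormedAddCommGroup E] [NormedAddCommGroup F]

theorem eventually_sub_eq_of_eventually_hasFDerivAt_s7 [NormedSpace 𝕜 E] [NormedSpace 𝕜 F]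
    {α : E → E →L[𝕜] F} {f g : E → F} {x : E}
    (hf : ∀ᶠ y in 𝓝 x, HasFDerivAt f (α y) y) (hg : ∀ᶠ y in 𝓝 x, HasFDerivAt g (α y) y) :
    ∀ᶠ y in 𝓝 x, f y - g y = f x - g x := by
  let _ : NormedSpace ℝ E := .restrictScalars ℝ 𝕜 E
  obtain ⟨r, hr, hball⟩ := Metric.eventually_nhds_iff_ball.1 (hf.and hg)
  have hderiv : ∀ y ∈ Metric.ball x r, HasFDerivAt (fun z ↦ f z - g z) (0 : E →L[𝕜] F) y :=
    fun y hy ↦ by simpa using (hball y hy).1.fun_sub (hball y hy).2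
  filter_upwards [Metric.ball_mem_nhds x hr] with y hy
  exact Metric.isOpen_ball.is_const_of_fderiv_eq_zero (convex_ball x r).isPreconnected
    (fun z hz ↦ (hderiv z hz).differentiableAt.differentiableWithinAt)
    (fun z hz ↦ (hderiv z hz).fderiv) hy (Metric.mem_ball_self hr)

theorem exists_forall_hasFDerivAt_of_locally [NormedSpace 𝕜 E] [NormedSpace 𝕜 F] {s : Set E}
    (hso : IsOpen s) (hs : IsSimplyConnected s) {α : E → E →L[𝕜] F}
    (hα : ∀ x ∈ s, ∃ f : E → F, ∀ᶠ y in 𝓝 x, HasFDerivAt f (α y) y) :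
    ∃ f : E → F, ∀ x ∈ s, HasFDerivAt f (α x) x := by
  let _ : NormedSpace ℝ E := .restrictScalars ℝ 𝕜 E
  have := hs.simplyConnectedSpace
  have := hso.locallyPathConnectedSpace
  have hnhds (x : s) (P : E → Prop) : (∀ᶠ y : s in 𝓝 x, P y) ↔ ∀ᶠ y in 𝓝 (x : E), P y := by
    rw [eventually_nhds_subtype_iff, hso.nhdsWithin_eq x.2]
  -- The cover is indexed by all functions `f`, each on the set where it is a local primitive.
  obtain ⟨g, hg⟩ := exists_forall_eventually_sub_eq (A := F)
    (U := fun f : E → F ↦ {x : s | ∀ᶠ y in 𝓝 (x : E), HasFDerivAt f (α y) y})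
    (f := fun f x ↦ f x)
    (fun f ↦ isOpen_setOfPred_eventually_nhds.preimage continuous_subtype_val)
    (fun x ↦ hα x x.2)
    (fun f₁ f₂ x hx ↦ (hnhds x fun y ↦ f₁ y - f₂ y = f₁ x - f₂ x).2
      (eventually_sub_eq_of_eventually_hasFDerivAt_s7 hx.1 hx.2))
  let G : E → F := Function.extend Subtype.val g 0
  have hG (x : s) : G x = g x := Subtype.val_injective.extend_apply g 0 x
  refine ⟨G, fun x hx ↦ ?_⟩
  obtain ⟨f, hf⟩ := hα x hx
  have hGf : ∀ᶠ y in 𝓝 x, G y - f y = G x - f x :=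
    (hnhds ⟨x, hx⟩ _).1 (by simpa only [hG, ← hG ⟨x, hx⟩] using hg f ⟨x, hx⟩ hf)
  refine (hf.self_of_nhds.const_add (G x - f x)).congr_of_eventuallyEq ?_
  filter_upwards [hGf] with y hy
  rw [← hy, sub_add_cancel]

theorem exists_forall_hasFDerivAt_of_isSimplyConnected_of_fderiv_symmetric [NormedSpace ℝ E]
    [NormedSpace ℝ F] [NormedSpace 𝕜 E] [NormedSpace 𝕜 F] [CompleteSpace F] {s : Set E}
    (hso : IsOpen s) (hs : IsSimplyConnected s) {α : E → E →L[𝕜] F}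
    (hα : DifferentiableOn ℝ α s)
    (hdα : ∀ x ∈ s, ∀ u v, fderiv ℝ α x u v = fderiv ℝ α x v u) :
    ∃ f : E → F, ∀ x ∈ s, HasFDerivAt f (α x) x := by
  refine exists_forall_hasFDerivAt_of_locally hso hs fun x hx ↦ ?_
  obtain ⟨r, hr, hball⟩ := Metric.isOpen_iff.1 hso x hx
  obtain ⟨f, hf⟩ := (convex_ball x r).exists_forall_hasFDerivAt_of_fderiv_symmetric
    Metric.isOpen_ball (hα.mono hball) fun y hy ↦ hdα y (hball hy)
  exact ⟨f, eventually_of_mem (Metric.ball_mem_nhds x hr) hf⟩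

end Primitive

section ConjugateDifferential

variable {ψ p : ℂ → ℝ} {z : ℂ}

theorem apply_I_mul_comm_of_add_eq_zero {F : Type*} [NormedAddCommGroup F] [NormedSpace ℝ F]
    {B : ℂ →L[ℝ] ℂ →L[ℝ] F} (hsymm : ∀ u v, B u v = B v u) (htrace : B 1 1 + B I I = 0) (u v : ℂ) :
    B u (I * v) = B v (I * u) := by
  have hdecomp (w : ℂ) : w = w.re • (1 : ℂ) + w.im • I := by simp
  have hdecompI (w : ℂ) : I * w = -w.im • (1 : ℂ) + w.re • I := by simp [Complex.ext_iff]
  rw [hdecompI u, hdecompI v]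
  nth_rw 1 [hdecomp u]
  nth_rw 3 [hdecomp v]
  simp only [map_add, map_smul, add_apply, smul_apply, hsymm I 1, eq_neg_of_add_eq_zero_left htrace]
  module

/-- The conjugate differential `⋆dψ = ∂ₓψ dy - ∂ᵧψ dx`, encoded as `v ↦ -dψ(I * v)`. -/
noncomputable def conjDifferential (ψ : ℂ → ℝ) (z : ℂ) : ℂ →L[ℝ] ℝ :=
  -(fderiv ℝ ψ z ∘L ContinuousLinearMap.mul ℝ ℂ I)

theorem conjDifferential_apply (v : ℂ) : conjDifferential ψ z v = -fderiv ℝ ψ z (I * v) := rfl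

theorem contDiffOn_conjDifferential {s : Set ℂ} (hs : IsOpen s) (hψ : ContDiffOn ℝ 2 ψ s) :
    ContDiffOn ℝ 1 (conjDifferential ψ) s :=
  ((hψ.fderiv_of_isOpen hs le_rfl).clm_comp contDiffOn_const).neg

theorem fderiv_conjDifferential_apply (hψ : DifferentiableAt ℝ (fderiv ℝ ψ) z) (u v : ℂ) :
    fderiv ℝ (conjDifferential ψ) z u v = -fderiv ℝ (fderiv ℝ ψ) z u (I * v) := by
  have h : HasFDerivAt (conjDifferential ψ) _ z :=
    (hψ.hasFDerivAt.clm_comp (hasFDerivAt_const (ContinuousLinearMap.mul ℝ ℂ I) z)).neg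
  simp [h.fderiv]

theorem lap_eq_fderiv_fderiv (hψ : DifferentiableAt ℝ (fderiv ℝ ψ) z) :
    lap ψ z = fderiv ℝ (fderiv ℝ ψ) z 1 1 + fderiv ℝ (fderiv ℝ ψ) z I I := by
  have hdir (u : ℂ) : fderiv ℝ (fun w ↦ fderiv ℝ ψ w u) z u = fderiv ℝ (fderiv ℝ ψ) z u u := by
    rw [fderiv_clm_apply hψ (by fun_prop)]
    simp
  exact congrArg₂ (· + ·) (hdir 1) (hdir I)

theorem fderiv_conjDifferential_symmetric (hψ : ContDiffAt ℝ 2 ψ z) (hlap : lap ψ z = 0) (u v : ℂ) :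
    fderiv ℝ (conjDifferential ψ) z u v = fderiv ℝ (conjDifferential ψ) z v u := by
  have hd : DifferentiableAt ℝ (fderiv ℝ ψ) z :=
    (hψ.fderiv_right (m := 1) le_rfl).differentiableAt one_ne_zero
  have hsymm : IsSymmSndFDerivAt ℝ ψ z := hψ.isSymmSndFDerivAt (by simp)
  rw [fderiv_conjDifferential_apply hd, fderiv_conjDifferential_apply hd,
    apply_I_mul_comm_of_add_eq_zero hsymm.eq (lap_eq_fderiv_fderiv hd ▸ hlap)]

theorem cauchyRiemann_of_hasFDerivAt_conjDifferential
    (hp : HasFDerivAt p (conjDifferential ψ z) z) :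
    pdx ψ z = pdy p z ∧ pdy ψ z = -pdx p z := by
  simp [pdx, pdy, hp.fderiv, conjDifferential_apply]

theorem differentiableAt_sub_I_mul_of_cauchyRiemann (hp : DifferentiableAt ℝ p z)
    (hψ : DifferentiableAt ℝ ψ z) (hx : pdx ψ z = pdy p z) (hy : pdy ψ z = -pdx p z) :
    DifferentiableAt ℂ (fun w ↦ (p w : ℂ) - I * (ψ w : ℂ)) z := by
  have hderiv : HasFDerivAt (fun w ↦ (p w : ℂ) - I * (ψ w : ℂ))
      (ofRealCLM ∘L fderiv ℝ p z - I • (ofRealCLM ∘L fderiv ℝ ψ z)) z :=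
    (ofRealCLM.hasFDerivAt.comp z hp.hasFDerivAt).sub
      ((ofRealCLM.hasFDerivAt.comp z hψ.hasFDerivAt).const_mul I)
  refine differentiableAt_complex_iff_differentiableAt_real.2 ⟨hderiv.differentiableAt, ?_⟩
  rw [pdx, pdy] at hx hy
  rw [hderiv.fderiv]
  simp [hx, hy, Complex.ext_iff]

end ConjugateDifferential

/-- Every harmonic function `ω` on a nonempty simply connected open set `Ω` has a
harmonic conjugate `p` satisfying the Cauchy–Riemann conditions
`∂ₓω = ∂ᵧp`, `∂ᵧω = −∂ₓp` on `Ω`; equivalently, `h = p − i ω` is holomorphic on `Ω`. -/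
theorem harmonic_conjugate_exists (Ω : Set ℂ) (hΩ : IsOpen Ω) (hne : Ω.Nonempty)
    (hsc : SimplyConnectedSpace Ω)
    (ω : ℂ → ℝ) (hω : ContDiffOn ℝ 2 ω Ω)
    (hharm : ∀ z ∈ Ω, lap ω z = 0) :
    ∃ p : ℂ → ℝ, ContDiffOn ℝ 1 p Ω ∧
      (∀ z ∈ Ω, pdx ω z = pdy p z ∧ pdy ω z = -pdx p z) ∧
      DifferentiableOn ℂ (fun z => (p z : ℂ) - Complex.I * (ω z : ℂ)) Ω := by
  have hωat : ∀ z ∈ Ω, ContDiffAt ℝ 2 ω z := fun z hz ↦ hω.contDiffAt (hΩ.mem_nhds hz)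
  have hstar : ContDiffOn ℝ 1 (conjDifferential ω) Ω := contDiffOn_conjDifferential hΩ hω
  obtain ⟨p, hp⟩ := exists_forall_hasFDerivAt_of_isSimplyConnected_of_fderiv_symmetric hΩ hsc
    (hstar.differentiableOn one_ne_zero)
    fun z hz ↦ fderiv_conjDifferential_symmetric (hωat z hz) (hharm z hz)
  have hCR : ∀ z ∈ Ω, pdx ω z = pdy p z ∧ pdy ω z = -pdx p z := fun z hz ↦
    cauchyRiemann_of_hasFDerivAt_conjDifferential (hp z hz)
  refine ⟨p, ?_, hCR, fun z hz ↦ ?_⟩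
  · exact (contDiffOn_succ_iff_hasFDerivWithinAt_of_uniqueDiffOn (n := 0) hΩ.uniqueDiffOn).2
      ⟨by simp, _, contDiffOn_zero.2 hstar.continuousOn, fun z hz ↦ (hp z hz).hasFDerivWithinAt⟩
  · exact (differentiableAt_sub_I_mul_of_cauchyRiemann (hp z hz).differentiableAt
      ((hωat z hz).differentiableAt two_ne_zero) (hCR z hz).1 (hCR z hz).2).differentiableWithinAt
end

section
/- Let Ω ⊆ ℂ be a nonempty open set which is simply connected as a topological subspace, and let h : ℂ → ℂ be holomorphic on Ω. Then there exists a function f : ℂ → ℂ holomorphic on Ω such that f′(z) = h(z) for every z ∈ Ω; that is, every holomorphic function on a simply connected open set has a holomorphic primitive. -/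
open Complex

/-!
Primitives of `h` exist on small discs, and any two of them differ by a local constant. They
therefore glue to a bundle over `Ω` with discrete fibre, whose continuous sections are the
primitives of `h` on `Ω`. This bundle is a covering space of the simply connected space `Ω`, so the
identity of `Ω` lifts to a continuous section.
-/

open Filter Set Topology Bundle

theorem exists_continuous_section_of_discrete_fiber {X F : Type*} {E : X → Type*}
    [TopologicalSpace X] [SimplyConnectedSpace X] [LocallyPathConnectedSpace X]
    [TopologicalSpace F] [DiscreteTopology F] [Nonempty F] [TopologicalSpace (TotalSpace F E)]
    [∀ x, TopologicalSpace (E x)] [FiberBundle F E] :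
    ∃ s : ∀ x, E x, Continuous fun x ↦ TotalSpace.mk' F x (s x) := by
  obtain ⟨x₀⟩ : Nonempty X := inferInstance
  obtain ⟨a⟩ := ‹Nonempty F›
  have hcov : IsCoveringMap (π F E) := FiberBundle.isCoveringMap
  obtain ⟨σ, ⟨-, hσ⟩, -⟩ := hcov.existsUnique_continuousMap_lifts (ContinuousMap.id X) x₀ _
    ((trivializationAt F E x₀).proj_symm_apply' (x := a) (mem_baseSet_trivializationAt F E x₀))
  have exists_mk_eq (z : TotalSpace F E) (x : X) (hz : z.proj = x) :
      ∃ v : E x, TotalSpace.mk' F x v = z := by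
    subst hz
    exact ⟨z.snd, rfl⟩
  choose s hs using fun x ↦ exists_mk_eq (σ x) x (congrFun hσ x)
  exact ⟨s, by simpa only [hs] using σ.continuous⟩

section Gluing

variable {X G ι : Type*} [TopologicalSpace X] [AddGroup G]

/-- The bundle with discrete fibre `G` whose continuous sections are the functions differing from
each `F i` by a local constant on `U i`. The value `a` at `x` of such a function has coordinate
`a - F i x` in the chart `i`. -/
def differenceBundleCore [TopologicalSpace G] [DiscreteTopology G] (U : ι → Set X)
    (hU : ∀ i, IsOpen (U i)) (index : X → ι) (hindex : ∀ x, x ∈ U (index x)) (F : ι → X → G)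
    (hF : ∀ i j, ∀ x ∈ U i ∩ U j, ∀ᶠ y in 𝓝 x, F i y - F j y = F i x - F j x) :
    FiberBundleCore ι X G where
  baseSet := U
  isOpen_baseSet := hU
  indexAt := index
  mem_baseSet_at := hindex
  coordChange i j x v := v + (F i x - F j x)
  coordChange_self i x _ v := by simp only [sub_self, add_zero]
  continuousOn_coordChange i j := by
    rintro ⟨x, v⟩ ⟨hx, -⟩
    have hdiff : ContinuousAt (fun y ↦ F i y - F j y) x :=
      continuousAt_const.congr ((hF i j x hx).mono fun _ ↦ Eq.symm)
    exact (continuousAt_snd.add (hdiff.comp_of_eq continuousAt_fst rfl)).continuousWithinAt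
  coordChange_comp i j k x _ v := by
    rw [add_assoc, sub_add_sub_cancel]

theorem exists_eventually_sub_eq_of_cover [SimplyConnectedSpace X] [LocallyPathConnectedSpace X]
    {U : ι → Set X} (hU : ∀ i, IsOpen (U i)) (hcover : ∀ x, ∃ i, x ∈ U i) {F : ι → X → G}
    (hF : ∀ i j, ∀ x ∈ U i ∩ U j, ∀ᶠ y in 𝓝 x, F i y - F j y = F i x - F j x) :
    ∃ g : X → G, ∀ i, ∀ x ∈ U i, ∀ᶠ y in 𝓝 x, g y - F i y = g x - F i x := by
  let _ : TopologicalSpace G := ⊥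
  have : DiscreteTopology G := ⟨rfl⟩
  choose index hindex using hcover
  let Z := differenceBundleCore U hU index hindex F hF
  obtain ⟨s : X → G, hs⟩ := exists_continuous_section_of_discrete_fiber (F := G) (E := Z.Fiber)
  let g (x : X) : G := s x + F (index x) x
  refine ⟨g, fun i x hx ↦ ?_⟩
  have hchart (y : X) : (Z.localTriv i ⟨y, s y⟩).2 = g y - F i y := (add_sub_assoc _ _ _).symm
  have hmem : (⟨x, s x⟩ : Z.TotalSpace) ∈ (Z.localTriv i).source :=
    (Z.mem_localTriv_source i _).2 hx
  have hcoord : ContinuousAt (fun y ↦ (Z.localTriv i ⟨y, s y⟩).2) x :=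
    (((Z.localTriv i).continuousAt hmem).comp_of_eq hs.continuousAt rfl).snd
  simp only [hchart] at hcoord
  exact hcoord.eventually_mem ((isOpen_discrete {g x - F i x}).mem_nhds rfl)

end Gluing

section Primitive

variable {𝕜 E F : Type*} [RCLike 𝕜] [NormedAddCommGroup E] [NormedSpace 𝕜 E] [NormedSpace ℝ E]
  [NormedAddCommGroup F] [NormedSpace 𝕜 F] {ω : E → E →L[𝕜] F}

theorem eventually_sub_eq_of_hasFDerivAt {f g : E → F} {x : E}
    (hf : ∀ᶠ y in 𝓝 x, HasFDerivAt f (ω y) y) (hg : ∀ᶠ y in 𝓝 x, HasFDerivAt g (ω y) y) :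
    ∀ᶠ y in 𝓝 x, f y - g y = f x - g x := by
  obtain ⟨r, hr, hball⟩ := Metric.eventually_nhds_iff_ball.1 (hf.and hg)
  have hderiv : ∀ y ∈ Metric.ball x r, HasFDerivAt (f - g) (0 : E →L[𝕜] F) y := fun y hy ↦ by
    simpa only [sub_self] using (hball y hy).1.sub (hball y hy).2
  filter_upwards [Metric.ball_mem_nhds x hr] with y hy
  exact Metric.isOpen_ball.is_const_of_fderiv_eq_zero (convex_ball x r).isPreconnected
    (fun z hz ↦ (hderiv z hz).differentiableAt.differentiableWithinAt)
    (fun z hz ↦ (hderiv z hz).fderiv) hy (Metric.mem_ball_self hr)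

theorem exists_hasFDerivAt_of_locally_exists {Ω : Set E} (hΩ : IsOpen Ω) [SimplyConnectedSpace Ω]
    (hω : ∀ x ∈ Ω, ∃ f : E → F, ∀ᶠ y in 𝓝 x, HasFDerivAt f (ω y) y) :
    ∃ f : E → F, ∀ x ∈ Ω, HasFDerivAt f (ω x) x := by
  have := hΩ.locallyPathConnectedSpace
  choose! f hf using hω
  let U (p : Ω) : Set Ω := {x | ∀ᶠ y in 𝓝 (x : E), HasFDerivAt (f p) (ω y) y}
  have hU (p : Ω) : IsOpen (U p) := isOpen_setOfPred_eventually_nhds.preimage continuous_subtype_val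
  obtain ⟨g, hg⟩ := exists_eventually_sub_eq_of_cover hU (fun x ↦ ⟨x, hf x x.2⟩)
    (F := fun p x ↦ f p x) fun p q x hx ↦
      continuousAt_subtype_val.eventually (eventually_sub_eq_of_hasFDerivAt hx.1 hx.2)
  refine ⟨Function.extend Subtype.val g 0, fun x hx ↦ ?_⟩
  let p : Ω := ⟨x, hx⟩
  have heq : Function.extend Subtype.val g 0 =ᶠ[𝓝 x] fun y ↦ g p - f p p + f p y := by
    rw [← hΩ.isOpenEmbedding_subtypeVal.map_nhds_eq p]
    refine eventually_map.2 ((hg p p (hf x hx)).mono fun y hy ↦ ?_)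
    rw [Subtype.val_injective.extend_apply]
    exact sub_eq_iff_eq_add.1 hy
  exact ((hf x hx).self_of_nhds.const_add _).congr_of_eventuallyEq heq

end Primitive

theorem holomorphic_primitive_exists_general {𝕜 E : Type*} [RCLike 𝕜] [NormedAddCommGroup E]
    [NormedSpace 𝕜 E] [CompleteSpace E] {Ω : Set 𝕜} (hΩ : IsOpen Ω) [SimplyConnectedSpace Ω]
    {h : 𝕜 → E} (hh : DifferentiableOn 𝕜 h Ω) :
    ∃ f : 𝕜 → E, ∀ z ∈ Ω, HasDerivAt f (h z) z := by
  refine exists_hasFDerivAt_of_locally_exists hΩ fun z hz ↦ ?_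
  obtain ⟨r, hr, hball⟩ := Metric.isOpen_iff.1 hΩ z hz
  obtain ⟨f, hf⟩ := (convex_ball z r).exists_forall_hasDerivWithinAt (hh.mono hball)
  refine ⟨f, ?_⟩
  filter_upwards [Metric.ball_mem_nhds z hr] with y hy
  exact ((hf y hy).hasDerivAt (Metric.isOpen_ball.mem_nhds hy)).hasFDerivAt

/-- Every holomorphic function on a nonempty simply connected open set `Ω ⊆ ℂ`
has a holomorphic primitive on `Ω`. -/
theorem holomorphic_primitive_exists (Ω : Set ℂ) (hΩ : IsOpen Ω) (hne : Ω.Nonempty)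
    (hsc : SimplyConnectedSpace Ω)
    (h : ℂ → ℂ) (hh : DifferentiableOn ℂ h Ω) :
    ∃ f : ℂ → ℂ, DifferentiableOn ℂ f Ω ∧ ∀ z ∈ Ω, deriv f z = h z := by
  obtain ⟨f, hf⟩ := holomorphic_primitive_exists_general hΩ hh
  exact ⟨f, fun z hz ↦ (hf z hz).differentiableAt.differentiableWithinAt,
    fun z hz ↦ (hf z hz).deriv⟩
end
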